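/- arXiv:2012.13733 — 2 statements merged into one kernel-verified Lean document; each statement's English description precedes it below -/
import Mathlib

section
/- Let (x_n)_{n≥1} be a bounded nonnegative real sequence and let α > 1 be a real number such that lim_{k→∞} (1/(α^{k+1} − α^k)) · Σ_{α^k ≤ i < α^{k+1}} x_i = 0, where the sum ranges over positive integers i with α^k ≤ i < α^{k+1}. Then (x_n) is Cesàro convergent to 0. -/
open Filter

/-! Let `u t` be the sum of the `x i` with `1 ≤ i < t`, and let `b k = α ^ k`. The increments of `u`
along `b` are the block sums, which are `o(b (k + 1) - b k)`; they telescope to `u (b k) = o(b k)`.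
As `u` is monotone, `u t ≤ u (b (k + 1))` for `b k < t ≤ b (k + 1)`, and `b (k + 1) = O(b k)`
turns the bound `o(b (k + 1))` into `o(t)`. -/

open Asymptotics

theorem isLittleO_of_sub_isLittleO_sub {E : Type*} [NormedAddCommGroup E] {a : ℕ → E} {b : ℕ → ℝ}
    (hb : Monotone b) (hb_top : Tendsto b atTop atTop)
    (h : (fun k => a (k + 1) - a k) =o[atTop] fun k => b (k + 1) - b k) : a =o[atTop] b := by
  have norm_b_top : Tendsto (norm ∘ b) atTop atTop := tendsto_norm_atTop_atTop.comp hb_top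
  have telescoped : (fun n => a n - a 0) =o[atTop] fun n => b n - b 0 := by
    have sub_top : Tendsto (fun n => b n - b 0) atTop atTop :=
      tendsto_atTop_add_const_right _ (-b 0) hb_top
    simp_rw [← Finset.sum_range_sub] at sub_top ⊢
    exact h.sum_range (fun k => sub_nonneg.2 (hb k.le_succ)) sub_top
  have a_zero_isLittleO : (fun _ => a 0) =o[atTop] b := isLittleO_const_left.2 (.inr norm_b_top)
  have b_zero_isLittleO : (fun _ => b 0) =o[atTop] b := isLittleO_const_left.2 (.inr norm_b_top)
  have sub_isLittleO : (fun n => a n - a 0) =o[atTop] b :=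
    telescoped.trans_isBigO ((isBigO_refl b _).sub b_zero_isLittleO.isBigO)
  simpa only [sub_add_cancel] using sub_isLittleO.add a_zero_isLittleO

theorem exists_tendsto_atTop_between {β : Type*} [LinearOrder β] {b : ℕ → β}
    (hb : StrictMono b) (hb_top : Tendsto b atTop atTop) :
    ∃ κ : β → ℕ, Tendsto κ atTop atTop ∧ ∀ᶠ t in atTop, b (κ t) < t ∧ t ≤ b (κ t + 1) := by
  choose! κ hκ using fun t (ht : b 0 < t) => hb.exists_between_of_tendsto_atTop hb_top ht
  have : Nonempty β := ⟨b 0⟩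
  have between : ∀ᶠ t in atTop, b (κ t) < t ∧ t ≤ b (κ t + 1) :=
    (eventually_ge_atTop (b 1)).mono fun t ht => hκ t ((hb one_pos).trans_le ht)
  refine ⟨κ, tendsto_atTop.2 fun K => ?_, between⟩
  filter_upwards [between, eventually_ge_atTop (b (K + 1))] with t ht hKt
  exact Nat.le_of_succ_le_succ (hb.le_iff_le.1 (hKt.trans ht.2))

theorem isLittleO_id_of_monotone_of_comp {u : ℝ → ℝ} (hu : Monotone u) {b : ℕ → ℝ}
    (hb : StrictMono b) (hb_top : Tendsto b atTop atTop)
    (hb_succ : (fun k => b (k + 1)) =O[atTop] b) (hub : (u ∘ b) =o[atTop] b) :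
    u =o[atTop] (id : ℝ → ℝ) := by
  obtain ⟨κ, hκ, between⟩ := exists_tendsto_atTop_between hb hb_top
  have left_isBigO : (b ∘ κ) =O[atTop] (id : ℝ → ℝ) := by
    refine IsBigO.of_bound' ?_
    filter_upwards [between, (hb_top.comp hκ).eventually_ge_atTop 0] with t ht hpos
    exact abs_le_abs_of_nonneg hpos ht.1.le
  have right_isLittleO : (fun t => u (b (κ t + 1))) =o[atTop] (id : ℝ → ℝ) :=
    (((hub.comp_tendsto (tendsto_add_atTop_nat 1)).trans_isBigO hb_succ).comp_tendsto
      hκ).trans_isBigO left_isBigO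
  have bound : u =O[atTop] fun t => |u 0| + |u (b (κ t + 1))| := by
    refine IsBigO.of_bound' ?_
    filter_upwards [between, eventually_ge_atTop 0] with t ht h0
    rw [Real.norm_eq_abs, Real.norm_of_nonneg (by positivity), abs_le]
    constructor
    · linarith [hu h0, neg_abs_le (u 0), abs_nonneg (u (b (κ t + 1)))]
    · linarith [hu ht.2, le_abs_self (u (b (κ t + 1))), abs_nonneg (u 0)]
  exact bound.trans_isLittleO ((isLittleO_const_id_atTop _).add right_isLittleO.norm_left)

/-- The sum of `x i` over the positive integers `i < t`. The cutoff `t` is real, so that a block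
sum over `[s, t)` with `0 < s ≤ t` is a difference of two values of `sumBelow x`. -/
noncomputable def sumBelow {M : Type*} [AddCommMonoid M] (x : ℕ → M) (t : ℝ) : M :=
  ∑ i ∈ Finset.Ico 1 ⌈t⌉₊, x i

theorem sumBelow_natCast_add_one {M : Type*} [AddCommMonoid M] (x : ℕ → M) (n : ℕ) :
    sumBelow x (n + 1) = ∑ i ∈ Finset.Icc 1 n, x i := by
  rw [sumBelow, ← Nat.cast_add_one, Nat.ceil_natCast, Finset.Ico_add_one_right_eq_Icc]

theorem sumBelow_sub_sumBelow {M : Type*} [AddCommGroup M] (x : ℕ → M) {s t : ℝ} (hs : 0 < s)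
    (hst : s ≤ t) : sumBelow x t - sumBelow x s = ∑ i ∈ Finset.Ico ⌈s⌉₊ ⌈t⌉₊, x i :=
  sub_eq_of_eq_add' <|
    (Finset.sum_Ico_consecutive x (Nat.one_le_ceil_iff.2 hs) (Nat.ceil_mono hst)).symm

theorem monotone_sumBelow {M : Type*} [AddCommMonoid M] [PartialOrder M] [IsOrderedAddMonoid M]
    {x : ℕ → M} (hx : ∀ n, 1 ≤ n → 0 ≤ x n) : Monotone (sumBelow x) := fun _ _ hst =>
  Finset.sum_le_sum_of_subset_of_nonneg (Finset.Ico_subset_Ico_right (Nat.ceil_mono hst))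
    fun i hi _ => hx i (Finset.mem_Ico.1 hi).1

theorem tendsto_cesaro_of_sumBelow_isLittleO {x : ℕ → ℝ}
    (h : sumBelow x =o[atTop] (id : ℝ → ℝ)) :
    Tendsto (fun n : ℕ => (1 / (n : ℝ)) * ∑ i ∈ Finset.Icc 1 n, x i) atTop (nhds 0) := by
  have shift : (fun t : ℝ => t + 1) =O[atTop] (id : ℝ → ℝ) :=
    (isBigO_refl _ _).add (isLittleO_const_id_atTop 1).isBigO
  have shifted : (fun t : ℝ => sumBelow x (t + 1)) =o[atTop] (id : ℝ → ℝ) :=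
    (h.comp_tendsto (tendsto_atTop_add_const_right _ 1 tendsto_id)).trans_isBigO shift
  simpa only [Function.comp_def, id, sumBelow_natCast_add_one, one_div_mul_eq_div] using
    (shifted.comp_tendsto tendsto_natCast_atTop_atTop).tendsto_div_nhds_zero

theorem sumBelow_sub_isLittleO_of_block_avg {x : ℕ → ℝ} {b : ℕ → ℝ}
    (hb : StrictMono b) (hb_top : Tendsto b atTop atTop)
    (hblock : Tendsto (fun k =>
        (1 / (b (k + 1) - b k)) * ∑ i ∈ Finset.Ico ⌈b k⌉₊ ⌈b (k + 1)⌉₊, x i)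
      atTop (nhds 0)) :
    (fun k => sumBelow x (b (k + 1)) - sumBelow x (b k)) =o[atTop] fun k => b (k + 1) - b k := by
  have gap_ne_zero (k : ℕ) : b (k + 1) - b k ≠ 0 := (sub_pos.2 (hb k.lt_succ_self)).ne'
  refine (isLittleO_iff_tendsto fun k hk => absurd hk (gap_ne_zero k)).2 (hblock.congr' ?_)
  filter_upwards [hb_top.eventually_gt_atTop 0] with k hk
  rw [sumBelow_sub_sumBelow x hk (hb k.lt_succ_self).le, one_div_mul_eq_div]

theorem nonneg_cesaro_of_block_avg_general {x : ℕ → ℝ} (hnonneg : ∀ n, 1 ≤ n → 0 ≤ x n)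
    {b : ℕ → ℝ} (hb : StrictMono b) (hb_top : Tendsto b atTop atTop)
    (hb_succ : (fun k => b (k + 1)) =O[atTop] b)
    (hblock : Tendsto (fun k =>
        (1 / (b (k + 1) - b k)) * ∑ i ∈ Finset.Ico ⌈b k⌉₊ ⌈b (k + 1)⌉₊, x i)
      atTop (nhds 0)) :
    Tendsto (fun n : ℕ => (1 / (n : ℝ)) * ∑ i ∈ Finset.Icc 1 n, x i) atTop (nhds 0) := by
  have along_b : (sumBelow x ∘ b) =o[atTop] b :=
    isLittleO_of_sub_isLittleO_sub hb.monotone hb_top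
      (sumBelow_sub_isLittleO_of_block_avg hb hb_top hblock)
  exact tendsto_cesaro_of_sumBelow_isLittleO
    (isLittleO_id_of_monotone_of_comp (monotone_sumBelow hnonneg) hb hb_top hb_succ along_b)

/-- If a bounded nonnegative real sequence has block averages over `[α^k, α^(k+1))` converging
to `0` for some `α > 1`, then it is Cesàro convergent to `0`. -/
theorem nonneg_cesaro_of_block_avg (x : ℕ → ℝ)
    (hbdd : ∃ C : ℝ, ∀ n : ℕ, 1 ≤ n → |x n| ≤ C)
    (hnonneg : ∀ n : ℕ, 1 ≤ n → 0 ≤ x n)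
    (α : ℝ) (hα : 1 < α)
    (hblock : Tendsto (fun k : ℕ =>
        (1 / (α ^ (k + 1) - α ^ k)) * ∑ i ∈ Finset.Ico ⌈α ^ k⌉₊ ⌈α ^ (k + 1)⌉₊, x i)
      atTop (nhds 0)) :
    Tendsto (fun n : ℕ => (1 / (n : ℝ)) * ∑ i ∈ Finset.Icc 1 n, x i) atTop (nhds 0) :=
  nonneg_cesaro_of_block_avg_general hnonneg (pow_right_strictMono₀ hα)
    (tendsto_pow_atTop_atTop_of_one_lt hα)
    (by simpa only [pow_succ'] using isBigO_const_mul_self α _ _) hblock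
end

section
/- For s ∈ [0,1], define A_s := ⋃_{n≥1} { 2^n + ⌊s·2^{n−1}⌋ + t : t = 1, …, 2^{n−1} } ⊆ ℕ. Then for every s ∈ [0,1], the upper asymptotic density of A_s equals 2/(3+s), i.e., limsup_{n→∞} (1/n) · #(A_s ∩ [1, n]) = 2/(3+s). -/
open Filter

/-- The set `A_s = ⋃_{n ≥ 1} {2^n + ⌊s·2^(n-1)⌋ + t : t = 1, …, 2^(n-1)}`. -/
def blockSet (s : ℝ) : Set ℕ :=
  {m : ℕ | ∃ n : ℕ, 1 ≤ n ∧ ∃ t : ℕ, 1 ≤ t ∧ t ≤ 2 ^ (n - 1) ∧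
    m = 2 ^ n + ⌊s * (2 : ℝ) ^ (n - 1)⌋₊ + t}

/-!
The set is a union of successive blocks `(aₖ, bₖ]`. Since a ratio at most `1` does not decrease
when the same amount is added to numerator and denominator, `#(A ∩ [1, n]) / n` increases through
each block and decreases through each gap, so its limsup is governed by the block ends, where
`#(A ∩ [1, bₖ]) / bₖ = (2^(k+1) - 1) / (3·2^k + ⌊s·2^k⌋)`. This tends to `2 / (3 + s)`, and from
below because the `-1` in the numerator outweighs the rounding in the denominator.
-/

open Set
open scoped Topology

section Limsup

variable {ι κ α : Type*} [ConditionallyCompleteLinearOrder α] [TopologicalSpace α] [OrderTopology α]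
  {l : Filter ι} {l' : Filter κ} [l'.NeBot] {f : ι → α} {φ : κ → ι} {L : α}

theorem limsup_eq_of_eventually_le_of_tendsto_comp (hle : ∀ᶠ i in l, f i ≤ L)
    (hφ : Tendsto φ l' l) (hlim : Tendsto (f ∘ φ) l' (𝓝 L)) : limsup f l = L := by
  have hcob : (map (f ∘ φ) l').IsCobounded (· ≤ ·) := hlim.isCoboundedUnder_le
  have hmap : map (f ∘ φ) l' ≤ map f l := by
    rw [← map_map]
    exact map_mono hφ
  apply le_antisymm
  · exact limsup_le_of_le (hcob.mono hmap) hle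
  · calc L = limsup (f ∘ φ) l' := hlim.limsup_eq.symm
      _ ≤ limsup f l := limsSup_le_limsSup_of_le hmap hcob ⟨L, hle⟩

end Limsup

section Counting

/-- The counting function `n ↦ #(A ∩ [1, n])` of a set of natural numbers, whose ratio to `n`
defines the asymptotic densities of `A`. The element `0` is not counted. -/
noncomputable def countUpTo (A : Set ℕ) (n : ℕ) : ℕ :=
  (A ∩ Icc 1 n).ncard

variable {A : Set ℕ} {m n : ℕ}

theorem countUpTo_eq_add_ncard_inter_Ioc (hmn : m ≤ n) :
    countUpTo A n = countUpTo A m + (A ∩ Ioc m n).ncard := by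
  have hsplit : A ∩ Icc 1 n = (A ∩ Icc 1 m) ∪ (A ∩ Ioc m n) := by
    ext x
    simp only [mem_inter_iff, mem_Icc, mem_union, mem_Ioc]
    grind
  have hdisj : Disjoint (A ∩ Icc 1 m) (A ∩ Ioc m n) :=
    disjoint_left.2 fun x hx hx' => hx.2.2.not_gt hx'.2.1
  simp only [countUpTo]
  rw [hsplit, ncard_union_eq hdisj ((finite_Icc 1 m).inter_of_right A)
    ((finite_Ioc m n).inter_of_right A)]

theorem countUpTo_succ_of_notMem (h : n + 1 ∉ A) : countUpTo A (n + 1) = countUpTo A n := by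
  have hempty : A ∩ Ioc n (n + 1) = ∅ := by
    ext x
    simp only [mem_inter_iff, mem_Ioc, mem_empty_iff_false]
    grind
  rw [countUpTo_eq_add_ncard_inter_Ioc n.le_succ, hempty, ncard_empty, add_zero]

theorem countUpTo_eq_add_sub_of_Ioc_subset (hmn : m ≤ n) (h : Ioc m n ⊆ A) :
    countUpTo A n = countUpTo A m + (n - m) := by
  rw [countUpTo_eq_add_ncard_inter_Ioc hmn, inter_eq_right.2 h, ncard_Ioc_nat]

theorem countUpTo_le_mul {L : ℝ} (hL0 : 0 ≤ L) (hL1 : L ≤ 1)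
    (h : ∀ m ∈ A, ∃ b, m ≤ b ∧ Ioc m b ⊆ A ∧ (countUpTo A b : ℝ) ≤ L * b) (n : ℕ) :
    (countUpTo A n : ℝ) ≤ L * n := by
  induction n with
  | zero => simp [countUpTo]
  | succ n ih =>
    by_cases hn : n + 1 ∈ A
    · obtain ⟨b, hnb, hsub, hb⟩ := h _ hn
      rw [countUpTo_eq_add_sub_of_Ioc_subset hnb hsub] at hb
      push_cast [Nat.cast_sub hnb] at hb ⊢
      have hle : (n + 1 : ℝ) ≤ b := mod_cast hnb
      linarith [mul_le_mul_of_nonneg_right hL1 (sub_nonneg.2 hle)]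
    · rw [countUpTo_succ_of_notMem hn]
      push_cast
      linarith

end Counting

section IntervalUnion

variable {a b : ℕ → ℕ}

theorem countUpTo_iUnion_Ioc (hab : ∀ k, a k ≤ b k) (hba : ∀ k, b k ≤ a (k + 1)) (k : ℕ) :
    countUpTo (⋃ i, Ioc (a i) (b i)) (b k) = ∑ i ∈ Finset.range (k + 1), (b i - a i) := by
  have ha : Monotone a := monotone_nat_of_le_succ fun i => (hab i).trans (hba i)
  have hb : Monotone b := monotone_nat_of_le_succ fun i => (hba i).trans (hab (i + 1))
  have hlt_a {i j : ℕ} (hij : i < j) : b i ≤ a j := (hba i).trans (ha hij)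
  have hunion : (⋃ i, Ioc (a i) (b i)) ∩ Icc 1 (b k) =
      ((Finset.range (k + 1)).biUnion fun i => Finset.Ioc (a i) (b i) : Finset ℕ) := by
    ext m
    simp only [mem_inter_iff, mem_iUnion, mem_Ioc, mem_Icc, Finset.coe_biUnion, Finset.coe_range,
      mem_Iio, Finset.coe_Ioc, exists_prop, Nat.lt_succ_iff]
    constructor
    · rintro ⟨⟨i, hi⟩, -, hmk⟩
      exact ⟨i, not_lt.1 fun hki => (hmk.trans (hlt_a hki)).not_gt hi.1, hi⟩
    · rintro ⟨i, hik, hi⟩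
      exact ⟨⟨i, hi⟩, Nat.one_le_of_lt hi.1, hi.2.trans (hb hik)⟩
  have hdisj : Pairwise fun i j => Disjoint (Finset.Ioc (a i) (b i)) (Finset.Ioc (a j) (b j)) := by
    refine (pairwise_disjoint_on _).2 fun i j hij => Finset.disjoint_left.2 fun m hi hj => ?_
    exact ((Finset.mem_Ioc.1 hi).2.trans (hlt_a hij)).not_gt (Finset.mem_Ioc.1 hj).1
  rw [countUpTo, hunion, ncard_coe_finset, Finset.card_biUnion fun i _ j _ hij => hdisj hij]
  simp only [Nat.card_Ioc]

theorem limsup_countUpTo_div_iUnion_Ioc {L : ℝ} (hL0 : 0 ≤ L) (hL1 : L ≤ 1)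
    (hb : Tendsto b atTop atTop)
    (hle : ∀ k, (countUpTo (⋃ i, Ioc (a i) (b i)) (b k) : ℝ) ≤ L * b k)
    (hlim : Tendsto (fun k => (countUpTo (⋃ i, Ioc (a i) (b i)) (b k) : ℝ) / b k) atTop (𝓝 L)) :
    limsup (fun n : ℕ => (countUpTo (⋃ i, Ioc (a i) (b i)) n : ℝ) / n) atTop = L := by
  refine limsup_eq_of_eventually_le_of_tendsto_comp (.of_forall fun n => ?_) hb hlim
  refine div_le_of_le_mul₀ n.cast_nonneg hL0 (countUpTo_le_mul hL0 hL1 (fun m hm => ?_) n)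
  obtain ⟨k, hk⟩ := mem_iUnion.1 hm
  have hsub : Ioc m (b k) ⊆ ⋃ i, Ioc (a i) (b i) :=
    (Ioc_subset_Ioc_left hk.1.le).trans (subset_iUnion_of_subset k subset_rfl)
  exact ⟨b k, hk.2, hsub, hle k⟩

end IntervalUnion

section Blocks

/-- The left end `aₖ` of the `k`-th block `(aₖ, bₖ]` of `blockSet s`. Blocks are indexed from `0`,
so this is the block of index `n = k + 1` in the definition of `blockSet`. -/
noncomputable def blockStart (s : ℝ) (k : ℕ) : ℕ :=
  2 ^ (k + 1) + ⌊s * 2 ^ k⌋₊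

/-- The right end `bₖ` of the `k`-th block `(aₖ, bₖ]` of `blockSet s`, indexed as in
`blockStart`. -/
noncomputable def blockEnd (s : ℝ) (k : ℕ) : ℕ :=
  blockStart s k + 2 ^ k

variable {s : ℝ}

theorem blockSet_eq_iUnion_Ioc (s : ℝ) : blockSet s = ⋃ k, Ioc (blockStart s k) (blockEnd s k) := by
  ext m
  simp only [blockSet, mem_ofPred_eq, mem_iUnion, mem_Ioc, blockEnd, blockStart]
  constructor
  · rintro ⟨n, hn, t, ht, ht', rfl⟩
    obtain ⟨k, rfl⟩ := Nat.exists_eq_add_of_le' hn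
    rw [Nat.add_sub_cancel] at ht' ⊢
    exact ⟨k, by omega, by omega⟩
  · rintro ⟨k, hk, hk'⟩
    refine ⟨k + 1, k.succ_pos, m - (2 ^ (k + 1) + ⌊s * 2 ^ k⌋₊), ?_⟩
    rw [Nat.add_sub_cancel]
    omega

theorem blockStart_le_blockEnd (s : ℝ) (k : ℕ) : blockStart s k ≤ blockEnd s k :=
  Nat.le_add_right _ _

theorem cast_blockEnd (s : ℝ) (k : ℕ) : (blockEnd s k : ℝ) = 3 * 2 ^ k + ⌊s * 2 ^ k⌋₊ := by
  simp only [blockEnd, blockStart]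
  push_cast
  ring

theorem tendsto_blockEnd_atTop (s : ℝ) : Tendsto (blockEnd s) atTop atTop :=
  tendsto_atTop_mono (fun k => Nat.le_add_left (2 ^ k) (blockStart s k))
    (tendsto_pow_atTop_atTop_of_one_lt one_lt_two)

theorem blockEnd_le_blockStart_succ (hs : 0 ≤ s) (k : ℕ) :
    blockEnd s k ≤ blockStart s (k + 1) := by
  have hfloor : ⌊s * 2 ^ k⌋₊ ≤ ⌊s * 2 ^ (k + 1)⌋₊ := by
    gcongr
    · exact one_le_two
    · exact k.le_succ
  simp only [blockEnd, blockStart]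
  rw [pow_succ 2 (k + 1), pow_succ 2 k]
  omega

theorem cast_countUpTo_blockSet_blockEnd (hs : 0 ≤ s) (k : ℕ) :
    (countUpTo (blockSet s) (blockEnd s k) : ℝ) = 2 * 2 ^ k - 1 := by
  have hsum : countUpTo (blockSet s) (blockEnd s k) = ∑ i ∈ Finset.range (k + 1), 2 ^ i := by
    rw [blockSet_eq_iUnion_Ioc,
      countUpTo_iUnion_Ioc (blockStart_le_blockEnd s) (blockEnd_le_blockStart_succ hs)]
    simp only [blockEnd, Nat.add_sub_cancel_left]
  rw [hsum]
  push_cast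
  rw [geom_sum_eq (by norm_num), pow_succ]
  ring

theorem countUpTo_blockSet_blockEnd_le (hs : 0 ≤ s) (k : ℕ) :
    (countUpTo (blockSet s) (blockEnd s k) : ℝ) ≤ 2 / (3 + s) * blockEnd s k := by
  have hfloor : s * 2 ^ k < ⌊s * 2 ^ k⌋₊ + 1 := Nat.lt_floor_add_one _
  rw [cast_countUpTo_blockSet_blockEnd hs, cast_blockEnd, div_mul_eq_mul_div,
    le_div_iff₀ (by positivity)]
  linarith

theorem tendsto_countUpTo_blockSet_div_blockEnd (hs : 0 ≤ s) :
    Tendsto (fun k => (countUpTo (blockSet s) (blockEnd s k) : ℝ) / blockEnd s k) atTop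
      (𝓝 (2 / (3 + s))) := by
  have hpow : Tendsto (fun k : ℕ => (2 : ℝ) ^ k) atTop atTop :=
    tendsto_pow_atTop_atTop_of_one_lt one_lt_two
  have hnum : Tendsto (fun k : ℕ => 2 - ((2 : ℝ) ^ k)⁻¹) atTop (𝓝 2) := by
    simpa only [sub_zero, Function.comp_apply] using
      (tendsto_inv_atTop_zero.comp hpow).const_sub 2
  have hden : Tendsto (fun k : ℕ => 3 + (⌊s * 2 ^ k⌋₊ : ℝ) / 2 ^ k) atTop (𝓝 (3 + s)) :=
    ((tendsto_nat_floor_mul_div_atTop hs).comp hpow).const_add 3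
  refine (hnum.div hden (by positivity)).congr fun k => ?_
  rw [cast_countUpTo_blockSet_blockEnd hs, cast_blockEnd]
  simp only [Pi.div_apply]
  field_simp

end Blocks

theorem blockSet_upper_density_general {s : ℝ} (hs : 0 ≤ s) :
    limsup (fun n : ℕ => (1 / (n : ℝ)) * Nat.card (blockSet s ∩ Set.Icc 1 n : Set ℕ)) atTop
      = 2 / (3 + s) := by
  have hle_one : 2 / (3 + s) ≤ 1 := div_le_one_of_le₀ (by linarith) (by positivity)
  have hle := countUpTo_blockSet_blockEnd_le hs
  have hlim := tendsto_countUpTo_blockSet_div_blockEnd hs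
  suffices limsup (fun n : ℕ => (countUpTo (blockSet s) n : ℝ) / n) atTop = 2 / (3 + s) by
    simpa only [one_div_mul_eq_div, Nat.card_coe_set_eq, countUpTo] using this
  rw [blockSet_eq_iUnion_Ioc] at hle hlim ⊢
  exact limsup_countUpTo_div_iUnion_Ioc (by positivity) hle_one (tendsto_blockEnd_atTop s) hle hlim

/-- For every `s ∈ [0,1]`, the upper asymptotic density of `A_s` equals `2/(3+s)`. -/
theorem blockSet_upper_density :
    ∀ s ∈ Set.Icc (0 : ℝ) 1,
      limsup (fun n : ℕ => (1 / (n : ℝ)) * Nat.card (blockSet s ∩ Set.Icc 1 n : Set ℕ)) atTop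
        = 2 / (3 + s) :=
  fun _ hs => blockSet_upper_density_general hs.1
end
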